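/- Let (A^{•,•}, ∂, ∂̄) be a bounded double complex of finite-dimensional ℂ-vector spaces concentrated in bidegrees 0 ≤ p,q ≤ n. Suppose Σ_{k∈ℤ} |h^k_BC − h^k_A| = 0, i.e., h^k_BC = h^k_A for every k, where h^k_BC = Σ_{p+q=k} dim H_BC^{p,q} and h^k_A = Σ_{p+q=k} dim H_A^{p,q}. Assume further the complex decomposes (as a double complex) into a direct sum of squares and zigzags. Then the ∂∂̄-Lemma holds: ker ∂ ∩ ker ∂̄ ∩ (im ∂ + im ∂̄) = im ∂∂̄ in every bidegree. -/

import Mathlib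

/-!
In each bidegree put `K = ker ∂ ∩ ker ∂̄`, `I = im ∂ + im ∂̄`, `Z = ker ∂∂̄`, `R = im ∂∂̄`, so that
`R ≤ K ∩ I` and `K + I ≤ Z`. Since `K / (K ∩ I) ≅ (K + I) / I`, one has
`h_BC - h_A = dim (K ∩ I) / R - dim Z / (K + I)`.
In terms of zigzags of length at least two, the first term counts the targets of arrows in the given
bidegree and the second one the sources of arrows.

The `∂∂̄`-Lemma says `K ∩ I = R` in every bidegree; the proof shows this together with `Z = K + I`,
by induction on the total degree, starting from negative degrees, where the complex vanishes.

* If `Z = K + I` in total degree `k - 1`, then `K ∩ I = R` in total degree `k`: for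
  `x = ∂u + ∂̄v` with `∂x = ∂̄x = 0` both `u` and `v` lie in `ker ∂∂̄`, and the decomposition of
  `u` and `v` along `K + im ∂ + im ∂̄` shows `∂u, ∂̄v ∈ im ∂∂̄` (`inf_le_of_pred`).
* If `K ∩ I = R` in total degree `k`, then `h_BC ≤ h_A` in each bidegree of that total degree, so
  `h^k_BC = h^k_A` forces equality in each of them, and that means `Z = K + I`
  (`finrank_quot_le` and `le_sup_of_finrank_eq`).
-/

open LinearMap Submodule Module

variable (A : ℤ → ℤ → Type) [∀ p q, AddCommGroup (A p q)] [∀ p q, Module ℂ (A p q)]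
variable (d1 : ∀ p q, A p q →ₗ[ℂ] A (p + 1) q)
variable (d2 : ∀ p q, A p q →ₗ[ℂ] A p (q + 1))

/-- The composition `∂∂̄ : A p q → A (p+1) (q+1)`. -/
abbrev ddb (p q : ℤ) : A p q →ₗ[ℂ] A (p + 1) (q + 1) :=
  (d1 p (q + 1)).comp (d2 p q)

/-- Bott-Chern cohomology at bidegree `(p+1, q+1)`:
`(ker ∂ ∩ ker ∂̄) / im ∂∂̄`. -/
abbrev HBC (p q : ℤ) :=
  ↥(ker (d1 (p+1) (q+1)) ⊓ ker (d2 (p+1) (q+1))) ⧸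
    ((range (ddb A d1 d2 p q)).comap (ker (d1 (p+1) (q+1)) ⊓ ker (d2 (p+1) (q+1))).subtype)

/-- Aeppli cohomology at bidegree `(p+1, q+1)`:
`ker ∂∂̄ / (im ∂ + im ∂̄)`. -/
abbrev HA (p q : ℤ) :=
  ↥(ker (ddb A d1 d2 (p+1) (q+1))) ⧸
    ((range (d1 p (q+1)) ⊔ range (d2 (p+1) q)).comap (ker (ddb A d1 d2 (p+1) (q+1))).subtype)

/-- Dolbeault cohomology `ker ∂̄ / im ∂̄` at bidegree `(p+1, q+1)`. -/
abbrev Hdb (p q : ℤ) :=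
  ↥(ker (d2 (p+1) (q+1))) ⧸ ((range (d2 (p+1) q)).comap (ker (d2 (p+1) (q+1))).subtype)

/-- Conjugate Dolbeault cohomology `ker ∂ / im ∂` at bidegree `(p+1, q+1)`. -/
abbrev Hd (p q : ℤ) :=
  ↥(ker (d1 (p+1) (q+1))) ⧸ ((range (d1 p (q+1))).comap (ker (d1 (p+1) (q+1))).subtype)

/-- A family of submodules closed under both differentials (a sub-double-complex). -/
def IsSubcomplex (S : ∀ p q : ℤ, Submodule ℂ (A p q)) : Prop :=
  ∀ p q : ℤ, (S p q).map (d1 p q) ≤ S (p + 1) q ∧ (S p q).map (d2 p q) ≤ S p (q + 1)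

/-- A square: four one-dimensional components in bidegrees `(a,b)`, `(a+1,b)`,
`(a,b+1)`, `(a+1,b+1)`, with all four connecting maps isomorphisms. -/
def IsSquareComplex (S : ∀ p q : ℤ, Submodule ℂ (A p q)) : Prop :=
  ∃ a b : ℤ, finrank ℂ (S a b) = 1 ∧
    (∀ r s : ℤ, ¬ ((r = a ∨ r = a + 1) ∧ (s = b ∨ s = b + 1)) → S r s = ⊥) ∧
    (S a b).map (d1 a b) = S (a + 1) b ∧ Disjoint (S a b) (ker (d1 a b)) ∧
    (S a b).map (d2 a b) = S a (b + 1) ∧ Disjoint (S a b) (ker (d2 a b)) ∧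
    (S (a + 1) b).map (d2 (a + 1) b) = S (a + 1) (b + 1) ∧
      Disjoint (S (a + 1) b) (ker (d2 (a + 1) b)) ∧
    (S a (b + 1)).map (d1 a (b + 1)) = S (a + 1) (b + 1) ∧
      Disjoint (S a (b + 1)) (ker (d1 a (b + 1)))

/-- A dot (zigzag of length one): a single one-dimensional component with zero
differentials. -/
def IsDot (S : ∀ p q : ℤ, Submodule ℂ (A p q)) : Prop :=
  ∃ a b : ℤ, finrank ℂ (S a b) = 1 ∧
    (∀ r s : ℤ, ¬ (r = a ∧ s = b) → S r s = ⊥) ∧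
    (S a b).map (d1 a b) = ⊥ ∧ (S a b).map (d2 a b) = ⊥

/-- A zigzag: a nonzero indecomposable sub-double-complex with components of
dimension at most one, finite support, and vanishing `∂∂̄` (which excludes squares);
such indecomposables are exactly the staircase-shaped complexes. -/
def IsZigzag (S : ∀ p q : ℤ, Submodule ℂ (A p q)) : Prop :=
  (∃ p q : ℤ, S p q ≠ ⊥) ∧
  (∀ p q : ℤ, finrank ℂ (S p q) ≤ 1) ∧
  (Set.Finite {pq : ℤ × ℤ | S pq.1 pq.2 ≠ ⊥}) ∧
  (∀ p q : ℤ, (S p q).map (ddb A d1 d2 p q) = ⊥) ∧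
  (∀ T T' : ∀ p q : ℤ, Submodule ℂ (A p q),
    IsSubcomplex A d1 d2 T → IsSubcomplex A d1 d2 T' →
    (∀ p q, T p q ⊔ T' p q = S p q) → (∀ p q, Disjoint (T p q) (T' p q)) →
    (∀ p q, T p q = ⊥) ∨ (∀ p q, T' p q = ⊥))

/-- `S : ι → ⋯` realizes the double complex `A` as an (internal) direct sum of the
sub-double-complexes `S i`. -/
def IsDecomposition (ι : Type) (S : ι → ∀ p q : ℤ, Submodule ℂ (A p q)) : Prop :=
  (∀ i, IsSubcomplex A d1 d2 (S i)) ∧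
  (∀ p q : ℤ, (⨆ i, S i p q) = ⊤) ∧
  (∀ p q : ℤ, ∀ i, Disjoint (S i p q) (⨆ j, ⨆ _ : j ≠ i, S j p q))

/-- The dimension of a subquotient `V / W`, in the encoding used for the cohomologies. -/
lemma finrank_quot_comap {E : Type*} [AddCommGroup E] [Module ℂ E] [FiniteDimensional ℂ E]
    {V W : Submodule ℂ E} (h : W ≤ V) :
    finrank ℂ (V ⧸ W.comap V.subtype) + finrank ℂ W = finrank ℂ V := by
  rw [← (Submodule.comapSubtypeEquivOfLe h).finrank_eq]
  exact Submodule.finrank_quotient_add_finrank _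

lemma finrank_quot_le {E : Type*} [AddCommGroup E] [Module ℂ E] [FiniteDimensional ℂ E]
    {K I Z R : Submodule ℂ E} (hK : K ≤ Z) (hI : I ≤ Z) (hR : R = K ⊓ I) :
    finrank ℂ (K ⧸ R.comap K.subtype) ≤ finrank ℂ (Z ⧸ I.comap Z.subtype) := by
  subst hR
  have h1 := finrank_quot_comap (inf_le_left : K ⊓ I ≤ K)
  have h2 := finrank_quot_comap hI
  have h3 := Submodule.finrank_sup_add_finrank_inf_eq K I
  have h4 := Submodule.finrank_mono (sup_le hK hI)
  omega

lemma le_sup_of_finrank_eq {E : Type*} [AddCommGroup E] [Module ℂ E] [FiniteDimensional ℂ E]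
    {K I Z R : Submodule ℂ E} (hK : K ≤ Z) (hI : I ≤ Z) (hR : R = K ⊓ I)
    (h : finrank ℂ (K ⧸ R.comap K.subtype) = finrank ℂ (Z ⧸ I.comap Z.subtype)) :
    Z ≤ K ⊔ I := by
  subst hR
  have h1 := finrank_quot_comap (inf_le_left : K ⊓ I ≤ K)
  have h2 := finrank_quot_comap hI
  have h3 := Submodule.finrank_sup_add_finrank_inf_eq K I
  exact (Submodule.eq_of_le_of_finrank_eq (sup_le hK hI) (by omega)).ge

/-- The equality `ker ∂∂̄ = (ker ∂ ∩ ker ∂̄) + im ∂ + im ∂̄` at bidegree `(p+1, q+1)`, stated as the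
nontrivial inclusion: no zigzag of length at least two has the source of an arrow there. -/
def NoSource (p q : ℤ) : Prop :=
  ker (ddb A d1 d2 (p+1) (q+1)) ≤
    (ker (d1 (p+1) (q+1)) ⊓ ker (d2 (p+1) (q+1))) ⊔ (range (d1 p (q+1)) ⊔ range (d2 (p+1) q))

/-- If `ker ∂∂̄ = (ker ∂ ∩ ker ∂̄) + im ∂ + im ∂̄` at the bidegrees `(p, q+1)` and `(p+1, q)`, then
the `∂∂̄`-Lemma holds at `(p+1, q+1)`. -/
lemma inf_le_of_pred
    (hd1 : ∀ p q (x : A p q), d1 (p+1) q (d1 p q x) = 0)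
    (hd2 : ∀ p q (x : A p q), d2 p (q+1) (d2 p q x) = 0)
    (hc : ∀ p q (x : A p q), d1 p (q+1) (d2 p q x) + d2 (p+1) q (d1 p q x) = 0)
    (p q : ℤ) (h1 : NoSource A d1 d2 (p-1) q) (h2 : NoSource A d1 d2 p (q-1)) :
    (ker (d1 (p+1) (q+1)) ⊓ ker (d2 (p+1) (q+1))) ⊓ (range (d1 p (q+1)) ⊔ range (d2 (p+1) q)) ≤
      range (ddb A d1 d2 p q) := by
  rintro x ⟨⟨hx1, hx2⟩, hx⟩
  obtain ⟨_, ⟨u, rfl⟩, _, ⟨v, rfl⟩, rfl⟩ := Submodule.mem_sup.1 hx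
  have hx1' : d1 (p+1) (q+1) (d1 p (q+1) u + d2 (p+1) q v) = 0 := hx1
  have hx2' : d2 (p+1) (q+1) (d1 p (q+1) u + d2 (p+1) q v) = 0 := hx2
  rw [map_add, hd1, zero_add] at hx1'
  rw [map_add, hd2, add_zero] at hx2'
  clear hx hx1 hx2
  refine Submodule.add_mem _ ?_ ?_
  · clear hx1' h2 v
    obtain ⟨r, rfl⟩ : ∃ r, p = r + 1 := ⟨p - 1, by ring⟩
    rw [add_sub_cancel_right] at h1
    have hu : d1 (r+1) (q+1+1) (d2 (r+1) (q+1) u) = 0 := by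
      have := hc _ _ u
      rwa [hx2', add_zero] at this
    obtain ⟨w, ⟨hw1, -⟩, _, hst, rfl⟩ := Submodule.mem_sup.1 (h1 hu)
    obtain ⟨_, ⟨s, rfl⟩, _, ⟨t, rfl⟩, rfl⟩ := Submodule.mem_sup.1 hst
    refine ⟨t, ?_⟩
    have hw1' : d1 (r+1) (q+1) w = 0 := hw1
    rw [map_add, map_add, hw1', hd1, zero_add, zero_add]
    rfl
  · clear hx2' h1 u
    obtain ⟨r, rfl⟩ : ∃ r, q = r + 1 := ⟨q - 1, by ring⟩
    rw [add_sub_cancel_right] at h2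
    obtain ⟨w, ⟨-, hw2⟩, _, hst, rfl⟩ := Submodule.mem_sup.1 (h2 hx1')
    obtain ⟨_, ⟨s, rfl⟩, _, ⟨t, rfl⟩, rfl⟩ := Submodule.mem_sup.1 hst
    refine ⟨-s, ?_⟩
    have hw2' : d2 (p+1) (r+1) w = 0 := hw2
    rw [map_add, map_add, hw2', hd2, add_zero, zero_add, map_neg]
    exact neg_eq_of_add_eq_zero_right (hc _ _ s)

/-- if `h^k_BC = h^k_A` for all `k` and the complex decomposes into
squares and zigzags, then the `∂∂̄`-Lemma holds. -/
theorem stmt10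
    [∀ p q, FiniteDimensional ℂ (A p q)]
    (n : ℕ)
    (hbd : ∀ p q : ℤ, (p < 0 ∨ (n : ℤ) < p ∨ q < 0 ∨ (n : ℤ) < q) → Subsingleton (A p q))
    (hd1 : ∀ p q (x : A p q), d1 (p+1) q (d1 p q x) = 0)
    (hd2 : ∀ p q (x : A p q), d2 p (q+1) (d2 p q x) = 0)
    (hc : ∀ p q (x : A p q), d1 p (q+1) (d2 p q x) + d2 (p+1) q (d1 p q x) = 0)
    (ι : Type) (S : ι → ∀ p q : ℤ, Submodule ℂ (A p q))
    (hdec : IsDecomposition A d1 d2 ι S)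
    (hsz : ∀ i, IsSquareComplex A d1 d2 (S i) ∨ IsZigzag A d1 d2 (S i))
    (heq : ∀ k : ℤ,
      (∑ p ∈ Finset.Icc (-2 : ℤ) ((n : ℤ) + 2), finrank ℂ (HBC A d1 d2 p (k - p - 2))) = (∑ p ∈ Finset.Icc (-2 : ℤ) ((n : ℤ) + 2), finrank ℂ (HA A d1 d2 p (k - p - 2)))) :
    ∀ (p q : ℤ) (x : A (p+1) (q+1)), d1 (p+1) (q+1) x = 0 → d2 (p+1) (q+1) x = 0 →
      x ∈ range (d1 p (q+1)) ⊔ range (d2 (p+1) q) → x ∈ range (ddb A d1 d2 p q) := by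
  have hZ : ∀ m : ℕ, ∀ p q : ℤ, p + q + 2 < m → NoSource A d1 d2 p q := by
    intro m
    induction m with
    | zero =>
      intro p q hpq x _
      have := hbd (p+1) (q+1) (by omega)
      rw [Subsingleton.elim x 0]
      exact Submodule.zero_mem _
    | succ m ih =>
      intro p q hpq
      by_cases hp : p ∈ Finset.Icc (-2 : ℤ) ((n : ℤ) + 2)
      · obtain ⟨k, rfl⟩ : ∃ k, q = k - p - 2 := ⟨p + q + 2, by ring⟩
        have hR : ∀ r, range (ddb A d1 d2 r (k - r - 2)) =
            (ker (d1 (r+1) (k-r-2+1)) ⊓ ker (d2 (r+1) (k-r-2+1))) ⊓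
              (range (d1 r (k-r-2+1)) ⊔ range (d2 (r+1) (k-r-2))) := by
          intro r
          refine le_antisymm ?_ (inf_le_of_pred A d1 d2 hd1 hd2 hc _ _
            (ih _ _ (by push_cast at hpq; omega)) (ih _ _ (by push_cast at hpq; omega)))
          rintro _ ⟨y, rfl⟩
          refine ⟨⟨hd1 _ _ _, ?_⟩, Submodule.mem_sup_left ⟨_, rfl⟩⟩
          have h := hc _ _ (d2 _ _ y)
          rwa [hd2, map_zero, zero_add] at h
        have hK : ∀ r s, ker (d1 (r+1) (s+1)) ⊓ ker (d2 (r+1) (s+1)) ≤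
            ker (ddb A d1 d2 (r+1) (s+1)) := by
          rintro r s x ⟨-, hx⟩
          have hx' : d2 (r+1) (s+1) x = 0 := hx
          simp [hx']
        have hI : ∀ r s, range (d1 r (s+1)) ⊔ range (d2 (r+1) s) ≤
            ker (ddb A d1 d2 (r+1) (s+1)) := by
          intro r s
          refine sup_le ?_ ?_
          · rintro _ ⟨y, rfl⟩
            have h := hc _ _ (d1 _ _ y)
            rwa [hd1, map_zero, add_zero] at h
          · rintro _ ⟨y, rfl⟩
            simp [hd2]
        exact le_sup_of_finrank_eq (hK _ _) (hI _ _) (hR p)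
          ((Finset.sum_eq_sum_iff_of_le fun r _ =>
            finrank_quot_le (hK r _) (hI r _) (hR r)).1 (heq k) p hp)
      · intro x _
        have := hbd (p+1) (q+1) (by rw [Finset.mem_Icc] at hp; omega)
        rw [Subsingleton.elim x 0]
        exact Submodule.zero_mem _
  intro p q x hx1 hx2 hx
  exact inf_le_of_pred A d1 d2 hd1 hd2 hc p q
    (hZ (p + q + 2).toNat.succ _ _ (by push_cast; omega))
    (hZ (p + q + 2).toNat.succ _ _ (by push_cast; omega)) ⟨⟨hx1, hx2⟩, hx⟩
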